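/- For every m ≥ 2, the number of OT-admissible words of length m whose leftmost symbol equals 2 is exactly N8(m−1)/2, and the same holds for leftmost symbol 5. -/

import Mathlib

/-!
The level complement `a ↦ 7 - a`, applied letterwise, preserves the forbidden set, hence
admissibility. No forbidden triple starts with `2` or `5`, so prepending one of these letters to a
nonempty admissible word only constrains its leftmost letter: it must not lie in `B1`, respectively
`B2`. The complement exchanges `B1` and `B2`, so in each case exactly half of the words qualify.
-/

namespace OTLOCO

def B1 : Finset (Fin 8) := {0, 1, 4, 5}
def B2 : Finset (Fin 8) := {2, 3, 6, 7}

def OTpair (a b : Fin 8) : Prop :=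
  (a = 2 ∧ b ∈ B1) ∨ (a ∈ B1 ∧ b = 2) ∨ (a = 5 ∧ b ∈ B2) ∨ (a ∈ B2 ∧ b = 5)

def OTtriple (a x b : Fin 8) : Prop :=
  (a ∈ ({0, 1, 4} : Finset (Fin 8)) ∧ x ∈ ({3, 6} : Finset (Fin 8)) ∧
    b ∈ ({0, 1, 4} : Finset (Fin 8))) ∨
  (a ∈ ({3, 6, 7} : Finset (Fin 8)) ∧ x ∈ ({1, 4} : Finset (Fin 8)) ∧
    b ∈ ({3, 6, 7} : Finset (Fin 8)))

instance (a b : Fin 8) : Decidable (OTpair a b) := by unfold OTpair; infer_instance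
instance (a x b : Fin 8) : Decidable (OTtriple a x b) := by unfold OTtriple; infer_instance

/-- A word `w : Fin m → Fin 8` (index `0` is the leftmost symbol) is OT-admissible. -/
def OTadm {m : ℕ} (w : Fin m → Fin 8) : Prop :=
  (∀ i j : Fin m, (j : ℕ) = (i : ℕ) + 1 → ¬ OTpair (w i) (w j)) ∧
  (∀ i j k : Fin m, (j : ℕ) = (i : ℕ) + 1 → (k : ℕ) = (i : ℕ) + 2 →
    ¬ OTtriple (w i) (w j) (w k))

instance {m : ℕ} : DecidablePred (@OTadm m) := fun w => by
  unfold OTadm; infer_instance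

/-- Number of OT-admissible words of length `m`, with the convention `N8 0 = 2`. -/
def N8 (m : ℕ) : ℕ :=
  if m = 0 then 2
  else (Finset.univ.filter (fun w : Fin m → Fin 8 => OTadm w)).card

theorem otpair_rev_iff : ∀ a b : Fin 8, OTpair a.rev b.rev ↔ OTpair a b := by decide

theorem ottriple_rev_iff : ∀ a x b : Fin 8, OTtriple a.rev x.rev b.rev ↔ OTtriple a x b := by
  decide

theorem rev_mem_B1_iff : ∀ b : Fin 8, b.rev ∈ B1 ↔ b ∉ B1 := by decide

theorem rev_mem_B2_iff : ∀ b : Fin 8, b.rev ∈ B2 ↔ b ∉ B2 := by decide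

theorem otpair_two_iff : ∀ b : Fin 8, OTpair 2 b ↔ b ∈ B1 := by decide

theorem otpair_five_iff : ∀ b : Fin 8, OTpair 5 b ↔ b ∈ B2 := by decide

theorem not_ottriple_two : ∀ x b : Fin 8, ¬ OTtriple 2 x b := by decide

theorem not_ottriple_five : ∀ x b : Fin 8, ¬ OTtriple 5 x b := by decide

theorem otadm_rev_comp_iff {m : ℕ} (w : Fin m → Fin 8) : OTadm (Fin.rev ∘ w) ↔ OTadm w := by
  simp only [OTadm, Function.comp_apply, otpair_rev_iff, ottriple_rev_iff]

theorem otadm_cons_iff {m : ℕ} (a : Fin 8) (w : Fin m → Fin 8) :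
    OTadm (Fin.cons a w : Fin (m + 1) → Fin 8) ↔
      (∀ i : Fin m, (i : ℕ) = 0 → ¬ OTpair a (w i)) ∧
      (∀ i j : Fin m, (i : ℕ) = 0 → (j : ℕ) = 1 → ¬ OTtriple a (w i) (w j)) ∧ OTadm w := by
  simp [OTadm, Fin.forall_fin_succ, add_assoc, and_assoc, and_left_comm]

section

open scoped Finset

variable {n : ℕ}

theorem otadm_cons_iff_of_forall_not_ottriple {a : Fin 8} (ha : ∀ x b, ¬ OTtriple a x b)
    (w : Fin (n + 1) → Fin 8) :
    OTadm (Fin.cons a w : Fin (n + 2) → Fin 8) ↔ OTadm w ∧ ¬ OTpair a (w 0) := by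
  simp [otadm_cons_iff, ha, and_comm]

theorem card_otadm_and_head_eq {a : Fin 8} (ha : ∀ x b, ¬ OTtriple a x b) :
    #{w : Fin (n + 2) → Fin 8 | OTadm w ∧ w 0 = a} =
      #{w : Fin (n + 1) → Fin 8 | OTadm w ∧ ¬ OTpair a (w 0)} := by
  symm
  rw [← Finset.card_image_of_injective _ (Fin.cons_right_injective (α := fun _ ↦ Fin 8) a)]
  refine congrArg _ (Finset.ext fun w ↦ ?_)
  cases w using Fin.consCases with
  | cons b v =>
    simp only [Finset.mem_filter_univ, Finset.mem_image, Fin.cons_zero, Fin.cons_inj]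
    constructor
    · rintro ⟨v, hv, rfl, rfl⟩
      exact ⟨(otadm_cons_iff_of_forall_not_ottriple ha v).2 hv, rfl⟩
    · rintro ⟨hw, rfl⟩
      exact ⟨v, (otadm_cons_iff_of_forall_not_ottriple ha v).1 hw, rfl, rfl⟩

theorem card_otadm_and_rev_comp (p : (Fin n → Fin 8) → Prop) [DecidablePred p] :
    #{w : Fin n → Fin 8 | OTadm w ∧ p (Fin.rev ∘ w)} = #{w : Fin n → Fin 8 | OTadm w ∧ p w} :=
  Finset.card_equiv ((Equiv.refl _).arrowCongr Fin.revPerm) fun w ↦ by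
    simp only [Finset.mem_filter_univ, ← otadm_rev_comp_iff w]
    rfl

theorem two_mul_card_otadm_and {p : (Fin n → Fin 8) → Prop} [DecidablePred p]
    (hp : ∀ w, p (Fin.rev ∘ w) ↔ ¬ p w) :
    2 * #{w : Fin n → Fin 8 | OTadm w ∧ p w} = #{w : Fin n → Fin 8 | OTadm w} := by
  calc 2 * #{w : Fin n → Fin 8 | OTadm w ∧ p w}
      = #{w : Fin n → Fin 8 | OTadm w ∧ p w} + #{w : Fin n → Fin 8 | OTadm w ∧ ¬ p w} := by
        simp only [two_mul, ← hp, card_otadm_and_rev_comp]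
    _ = #{w : Fin n → Fin 8 | OTadm w} := by
        simp only [← Finset.filter_filter, Finset.card_filter_add_card_filter_not]

theorem two_mul_card_otadm_and_head_eq {a : Fin 8} (htriple : ∀ x b, ¬ OTtriple a x b)
    (hpair : ∀ b, OTpair a b.rev ↔ ¬ OTpair a b) :
    2 * #{w : Fin (n + 2) → Fin 8 | OTadm w ∧ w 0 = a} = N8 (n + 1) := by
  rw [card_otadm_and_head_eq htriple]
  exact two_mul_card_otadm_and fun w ↦ not_congr (hpair (w 0))

end

theorem leftmost_two_and_five_counts (m : ℕ) (hm : 2 ≤ m) :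
    (((Finset.univ.filter (fun w : Fin m → Fin 8 =>
        OTadm w ∧ w ⟨0, by omega⟩ = (2 : Fin 8))).card : ℚ) = (N8 (m - 1) : ℚ) / 2) ∧
    (((Finset.univ.filter (fun w : Fin m → Fin 8 =>
        OTadm w ∧ w ⟨0, by omega⟩ = (5 : Fin 8))).card : ℚ) = (N8 (m - 1) : ℚ) / 2) := by
  obtain ⟨n, rfl⟩ : ∃ n, m = n + 2 := ⟨m - 2, by omega⟩
  have h₂ := two_mul_card_otadm_and_head_eq (n := n) not_ottriple_two
    (by simp only [otpair_two_iff, rev_mem_B1_iff, implies_true])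
  have h₅ := two_mul_card_otadm_and_head_eq (n := n) not_ottriple_five
    (by simp only [otpair_five_iff, rev_mem_B2_iff, implies_true])
  rw [eq_div_iff two_ne_zero, eq_div_iff two_ne_zero, mul_comm, mul_comm _ (2 : ℚ)]
  exact ⟨mod_cast h₂, mod_cast h₅⟩

end OTLOCO
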